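/- Decoupling of the two Dirac operators: the twisted Dirac operator on 𝔥 and Kostant's cubic Dirac operator anticommute, D'_𝔥·D_{𝔤/𝔥} + D_{𝔤/𝔥}·D'_𝔥 = 0 in A = U(𝔤) ⊗ Cl(𝔤). -/

import Mathlib

open CliffordAlgebra TensorProduct

/-!
Put `θ(Z) = Z ⊗ 1 + 1 ⊗ ads_𝔭(Z)` for `Z ∈ 𝔥`, so that
`D'_𝔥 = ∑ a, (1 ⊗ Z*_a) · θ(Z_a) + 1 ⊗ 2γ_𝔥`. Commutator with `θ(Z)` acts as `ad Z` both on `U(𝔤)`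
and on `ι(𝔭)`, and `D_{𝔤/𝔥}` is built from such equivariant maps by contracting the `ad Z`-invariant
tensor `∑ i, Y_i ⊗ Y*_i`; hence `θ(Z)` commutes with `D_{𝔤/𝔥}`. On the other hand `D_{𝔤/𝔥}` is odd
in Clifford generators orthogonal to `𝔥`, so it anticommutes with `1 ⊗ ι(W)` for `W ∈ 𝔥`, and
therefore with `1 ⊗ γ_𝔥`, a sum of products of three such elements.
-/

/-- Two elements of a ring anticommute if their anticommutator vanishes. -/
def Anticommute {R : Type*} [Ring R] (a b : R) : Prop :=
  a * b + b * a = 0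

namespace Anticommute

variable {R S : Type*} [Ring R] {a b c d : R}

theorem mul_eq_neg (h : Anticommute a b) : a * b = -(b * a) :=
  eq_neg_of_add_eq_zero_left h

theorem symm (h : Anticommute a b) : Anticommute b a :=
  (add_comm _ _).trans h

theorem add_left (ha : Anticommute a d) (hb : Anticommute b d) : Anticommute (a + b) d := by
  rw [Anticommute, add_mul, mul_add, add_add_add_comm, ha, hb, add_zero]

theorem sum_left {J : Type*} {s : Finset J} {f : J → R} (h : ∀ j ∈ s, Anticommute (f j) d) :
    Anticommute (∑ j ∈ s, f j) d := by
  rw [Anticommute, Finset.sum_mul, Finset.mul_sum, ← Finset.sum_add_distrib]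
  exact Finset.sum_eq_zero h

theorem smul_left {k : Type*} [CommRing k] [Algebra k R] (r : k) (h : Anticommute a d) :
    Anticommute (r • a) d := by
  rw [Anticommute, smul_mul_assoc, mul_smul_comm, ← smul_add, h, smul_zero]

theorem commute_mul_left (ha : Anticommute a d) (hb : Anticommute b d) : Commute (a * b) d := by
  rw [commute_iff_eq, mul_assoc, hb.mul_eq_neg, mul_neg, ← mul_assoc, ha.mul_eq_neg, neg_mul,
    neg_neg, mul_assoc]

theorem mul_left (ha : Anticommute a d) (hb : Commute b d) : Anticommute (a * b) d := by
  rw [Anticommute, mul_assoc, hb.eq, ← mul_assoc, ha.mul_eq_neg, neg_mul, mul_assoc,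
    neg_add_cancel]

theorem mul_mul_left (ha : Anticommute a d) (hb : Anticommute b d) (hc : Anticommute c d) :
    Anticommute (a * b * c) d :=
  mul_assoc a b c ▸ ha.mul_left (hb.commute_mul_left hc)

theorem tmul {k : Type*} [CommRing k] [Ring S] [Algebra k R] [Algebra k S] {u v : S}
    (huv : Commute u v) (h : Anticommute a b) : Anticommute (u ⊗ₜ[k] a) (v ⊗ₜ[k] b) := by
  rw [Anticommute, Algebra.TensorProduct.tmul_mul_tmul, Algebra.TensorProduct.tmul_mul_tmul,
    huv.eq, ← tmul_add, h, tmul_zero]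

end Anticommute

section DualFrame

variable {k M N I : Type*} [CommRing k] [AddCommGroup M] [Module k M] [AddCommGroup N] [Module k N]
  [Fintype I] {B : LinearMap.BilinForm k M} {P : Submodule k M} {y y' : I → M}

/-- `∑ i, y i ⊗ y' i` is the canonical tensor of `P`: the vectors of `P` are reproduced from their
pairings with `y'`. When `y` is linearly independent, this says that `y` and `y'` are `B`-dual
bases of `P`. -/
structure IsDualFrame (B : LinearMap.BilinForm k M) (P : Submodule k M) (y y' : I → M) : Prop where
  mem : ∀ i, y i ∈ P
  mem_dual : ∀ i, y' i ∈ P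
  sum_smul : ∀ x ∈ P, ∑ i, B (y' i) x • y i = x

namespace IsDualFrame

theorem symm (h : IsDualFrame B P y y') (hB : B.IsSymm) : IsDualFrame B P y' y where
  mem := h.mem_dual
  mem_dual := h.mem
  sum_smul x hx := by
    set x' := ∑ j, B (y j) x • y' j with hx'
    have hx'P : x' ∈ P := sum_mem fun j _ => P.smul_mem _ (h.mem_dual j)
    have pairing_eq : ∀ z ∈ P, B z x' = B z x := fun z hz => by
      conv_rhs => rw [← h.sum_smul z hz]
      simp only [hx', map_sum, map_smul, LinearMap.sum_apply, LinearMap.smul_apply, smul_eq_mul]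
      exact Finset.sum_congr rfl fun j _ => by rw [hB.eq z, mul_comm]
    rw [← h.sum_smul x' hx'P, ← h.sum_smul x hx]
    simp only [pairing_eq _ (h.mem_dual _), h.sum_smul x hx]

theorem of_projection {A : Type*} [DecidableEq I] (hy : ∀ i, y i ∈ P) (hy' : ∀ i, y' i ∈ P)
    (hdual : ∀ i j, B (y' i) (y j) = if i = j then 1 else 0) {z : A → M}
    (hz : ∀ i a, B (y' i) (z a) = 0) (hspan : Submodule.span k (Set.range (Sum.elim z y)) = ⊤)
    {p : Module.End k M} (hpP : ∀ x ∈ P, p x = x) (hpz : ∀ a, p (z a) = 0) :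
    IsDualFrame B P y y' where
  mem := hy
  mem_dual := hy'
  sum_smul x hx := by
    have expansion : ∑ i, (B (y' i)).smulRight (y i) = p := by
      refine LinearMap.ext_on_range hspan ?_
      rintro (a | j)
      · simp [hz, hpz]
      · simp [hdual, hpP _ (hy j)]
    simpa [hpP x hx] using LinearMap.congr_fun expansion x

variable {T : Module.End k M}

theorem sum_apply_add_sum_apply_eq_zero (h : IsDualFrame B P y y') (hB : B.IsSymm)
    (hT : ∀ x y, B (T x) y = -B x (T y)) (hTP : ∀ x ∈ P, T x ∈ P) (f : M →ₗ[k] M →ₗ[k] N) :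
    ∑ i, f (T (y i)) (y' i) + ∑ i, f (y i) (T (y' i)) = 0 := by
  have left_expansion : ∑ i, f (T (y i)) (y' i) =
      ∑ j, ∑ i, B (y' j) (T (y i)) • f (y j) (y' i) := by
    rw [Finset.sum_comm]
    refine Finset.sum_congr rfl fun i _ => ?_
    conv_lhs => rw [← h.sum_smul _ (hTP _ (h.mem i))]
    simp only [map_sum, map_smul, LinearMap.sum_apply, LinearMap.smul_apply]
  have right_expansion : ∑ j, f (y j) (T (y' j)) =
      ∑ j, ∑ i, B (y i) (T (y' j)) • f (y j) (y' i) := by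
    refine Finset.sum_congr rfl fun j _ => ?_
    conv_lhs => rw [← (h.symm hB).sum_smul _ (hTP _ (h.mem_dual j))]
    simp only [map_sum, map_smul]
  have skew (i j : I) : B (y' j) (T (y i)) + B (y i) (T (y' j)) = 0 := by
    rw [hB.eq, hT, neg_add_cancel]
  simp only [left_expansion, right_expansion, ← Finset.sum_add_distrib, ← add_smul, skew,
    zero_smul, Finset.sum_const_zero]

end IsDualFrame

end DualFrame

theorem apply_projection_comm {k M : Type*} [CommRing k] [AddCommGroup M] [Module k M]
    {N P : Submodule k M} (hNP : Codisjoint N P) {p T : Module.End k M} (hpN : ∀ x ∈ N, p x = 0)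
    (hpP : ∀ x ∈ P, p x = x) (hTN : ∀ x ∈ N, T x ∈ N) (hTP : ∀ x ∈ P, T x ∈ P) (x : M) :
    T (p x) = p (T x) := by
  obtain ⟨n, y, hn, hy, rfl⟩ := Submodule.codisjoint_iff_exists_add_eq.mp hNP x
  simp only [map_add, hpN n hn, hpP y hy, hpN _ (hTN n hn), hpP _ (hTP y hy), zero_add]

section Commutator

attribute [local instance] LieRing.ofAssociativeRing

theorem lie_mul_eq_lie_mul_add_mul_lie {R : Type*} [Ring R] (s a b : R) :
    ⁅s, a * b⁆ = ⁅s, a⁆ * b + a * ⁅s, b⁆ := by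
  simp only [Ring.lie_def]
  noncomm_ring

section Contraction

variable {k M R I : Type*} [CommRing k] [AddCommGroup M] [Module k M] [Ring R] [Algebra k R]
  [Fintype I] {B : LinearMap.BilinForm k M} {P : Submodule k M} {y y' : I → M}
  {T : Module.End k M}

theorem IsDualFrame.lie_sum_mul (h : IsDualFrame B P y y') (hB : B.IsSymm)
    (hT : ∀ x y, B (T x) y = -B x (T y)) (hTP : ∀ x ∈ P, T x ∈ P) (E K : M →ₗ[k] R) {s : R}
    (hE : ∀ x ∈ P, ⁅s, E x⁆ = E (T x)) :
    ⁅s, ∑ i, E (y' i) * K (y i)⁆ = ∑ i, E (y' i) * (⁅s, K (y i)⁆ - K (T (y i))) := by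
  have invariance : ∑ i, E (y' i) * K (T (y i)) + ∑ i, E (T (y' i)) * K (y i) = 0 :=
    h.sum_apply_add_sum_apply_eq_zero hB hT hTP ((LinearMap.mul k R).flip.compl₁₂ K E)
  simp only [lie_sum, lie_mul_eq_lie_mul_add_mul_lie, hE _ (h.mem_dual _), mul_sub,
    Finset.sum_add_distrib, Finset.sum_sub_distrib, eq_neg_of_add_eq_zero_right invariance]
  abel

theorem IsDualFrame.lie_sum_mul_eq_zero (h : IsDualFrame B P y y') (hB : B.IsSymm)
    (hT : ∀ x y, B (T x) y = -B x (T y)) (hTP : ∀ x ∈ P, T x ∈ P) (E K : M →ₗ[k] R) {s : R}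
    (hE : ∀ x ∈ P, ⁅s, E x⁆ = E (T x)) (hK : ∀ x ∈ P, ⁅s, K x⁆ = K (T x)) :
    ⁅s, ∑ i, E (y' i) * K (y i)⁆ = 0 := by
  simp [h.lie_sum_mul hB hT hTP E K hE, hK _ (h.mem _)]

end Contraction

section Clifford

variable {k M I : Type*} [CommRing k] [AddCommGroup M] [Module k M]
  {B : LinearMap.BilinForm k M} {P : Submodule k M} {y y' : I → M} {T : Module.End k M}

theorem anticommute_ι_of_isOrtho (hB : B.IsSymm) {a b : M} (hab : B a b = 0) :
    Anticommute (ι B.toQuadraticMap a) (ι B.toQuadraticMap b) := by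
  rw [Anticommute, ι_mul_ι_add_swap, LinearMap.BilinMap.polar_toQuadraticMap, hB.eq b a, hab,
    add_zero, map_zero]

theorem lie_ι_mul_ι_ι (hB : B.IsSymm) (a b c : M) :
    ⁅ι B.toQuadraticMap a * ι B.toQuadraticMap b, ι B.toQuadraticMap c⁆ =
      (2 * B b c) • ι B.toQuadraticMap a - (2 * B a c) • ι B.toQuadraticMap b := by
  have swap (x z : M) : ι B.toQuadraticMap x * ι B.toQuadraticMap z =
      (2 * B x z) • 1 - ι B.toQuadraticMap z * ι B.toQuadraticMap x := by
    rw [eq_sub_iff_add_eq, ι_mul_ι_add_swap, LinearMap.BilinMap.polar_toQuadraticMap, hB.eq z x,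
      two_mul, Algebra.algebraMap_eq_smul_one]
  rw [Ring.lie_def, mul_assoc, swap b c, mul_sub, ← mul_assoc, swap a c, sub_mul, mul_smul_one,
    smul_one_mul, mul_assoc]
  abel

variable [Fintype I]

/-- The image of a skew endomorphism `T` of `P` under `𝔰𝔬(P) → Cl(P)`, computed from the canonical
tensor `∑ i, y i ⊗ y' i` of `P`. For `T = ad Z` it is `ads_𝔭(Z)`; no projection onto `P` occurs
because `T` is meant to preserve `P`. -/
def spinLift [Invertible (4 : k)] (B : LinearMap.BilinForm k M) (y y' : I → M)
    (T : Module.End k M) : CliffordAlgebra B.toQuadraticMap :=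
  -⅟(4 : k) • ∑ i, ι B.toQuadraticMap (y' i) * ι B.toQuadraticMap (T (y i))

theorem IsDualFrame.lie_spinLift_ι [Invertible (4 : k)] (h : IsDualFrame B P y y')
    (hB : B.IsSymm) (hT : ∀ x y, B (T x) y = -B x (T y)) (hTP : ∀ x ∈ P, T x ∈ P)
    {c : M} (hc : c ∈ P) :
    ⁅spinLift B y y' T, ι B.toQuadraticMap c⁆ = ι B.toQuadraticMap (T c) := by
  have sum_left : ∑ i, B (T (y i)) c • ι B.toQuadraticMap (y' i) = -ι B.toQuadraticMap (T c) := by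
    rw [← (h.symm hB).sum_smul (T c) (hTP c hc)]
    simp only [hT, neg_smul, Finset.sum_neg_distrib, map_sum, map_smul]
  have sum_right : ∑ i, B (y' i) c • ι B.toQuadraticMap (T (y i)) = ι B.toQuadraticMap (T c) := by
    conv_rhs => rw [← h.sum_smul c hc]
    simp only [map_sum, map_smul]
  rw [spinLift, smul_lie, sum_lie]
  simp only [lie_ι_mul_ι_ι hB, mul_smul, Finset.sum_sub_distrib, ← Finset.smul_sum, sum_left,
    sum_right]
  rw [show (2 : k) • -ι B.toQuadraticMap (T c) - (2 : k) • ι B.toQuadraticMap (T c) =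
    (4 : k) • -ι B.toQuadraticMap (T c) by module, neg_smul, invOf_smul_smul, neg_neg]

/-- The cubic element obtained by contracting a bilinear map `φ` with two copies of the canonical
tensor `∑ i, y i ⊗ y' i`. Up to the factor `-1/24` it is `γ_𝔥` or `γ_𝔭`, when `φ` is the Lie
bracket or its projection to `𝔭`. -/
def cubicElement (B : LinearMap.BilinForm k M) (y y' : I → M) (φ : M →ₗ[k] M →ₗ[k] M) :
    CliffordAlgebra B.toQuadraticMap :=
  ∑ i, ∑ j, ι B.toQuadraticMap (y' i) * ι B.toQuadraticMap (y' j) *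
    ι B.toQuadraticMap (φ (y i) (y j))

variable {φ : M →ₗ[k] M →ₗ[k] M}

theorem IsDualFrame.lie_cubicElement_eq_zero (h : IsDualFrame B P y y') (hB : B.IsSymm)
    (hT : ∀ x y, B (T x) y = -B x (T y)) (hTP : ∀ x ∈ P, T x ∈ P)
    (hφP : ∀ x y, φ x y ∈ P) (hφT : ∀ x y, T (φ x y) = φ (T x) y + φ x (T y))
    {s : CliffordAlgebra B.toQuadraticMap}
    (hs : ∀ x ∈ P, ⁅s, ι B.toQuadraticMap x⁆ = ι B.toQuadraticMap (T x)) :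
    ⁅s, cubicElement B y y' φ⁆ = 0 := by
  let contraction : M →ₗ[k] CliffordAlgebra B.toQuadraticMap := ∑ j,
    LinearMap.mulLeft k (ι B.toQuadraticMap (y' j)) ∘ₗ ι B.toQuadraticMap ∘ₗ φ.flip (y j)
  have contraction_apply (x : M) : contraction x =
      ∑ j, ι B.toQuadraticMap (y' j) * ι B.toQuadraticMap (φ x (y j)) := by
    simp [contraction]
  have equivariance (x : M) : ⁅s, contraction x⁆ = contraction (T x) := by
    rw [contraction_apply, contraction_apply]
    refine (h.lie_sum_mul hB hT hTP _ (ι B.toQuadraticMap ∘ₗ φ x) hs).trans ?_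
    simp only [LinearMap.comp_apply, hs _ (hφP _ _), hφT, map_add, add_sub_cancel_right]
  have cubic_eq : cubicElement B y y' φ = ∑ i, ι B.toQuadraticMap (y' i) * contraction (y i) := by
    simp only [cubicElement, contraction_apply, Finset.mul_sum, mul_assoc]
  rw [cubic_eq]
  exact h.lie_sum_mul_eq_zero hB hT hTP _ contraction hs fun x _ => equivariance x

theorem anticommute_ι_cubicElement (hB : B.IsSymm) {w : M} (hy' : ∀ i, B w (y' i) = 0)
    (hφ : ∀ i j, B w (φ (y i) (y j)) = 0) :
    Anticommute (ι B.toQuadraticMap w) (cubicElement B y y' φ) :=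
  (Anticommute.sum_left fun i _ => Anticommute.sum_left fun j _ => Anticommute.mul_mul_left
    (anticommute_ι_of_isOrtho hB (hy' i)).symm (anticommute_ι_of_isOrtho hB (hy' j)).symm
    (anticommute_ι_of_isOrtho hB (hφ i j)).symm).symm

end Clifford

section Dirac

variable {k g A I : Type*} [CommRing k] [LieRing g] [LieAlgebra k g] [Fintype A] [Fintype I]
  {B : LinearMap.BilinForm k g} {P : Submodule k g} {y y' : I → g} {φ : g →ₗ[k] g →ₗ[k] g}

/-- The quantum Weil algebra `U(𝔤) ⊗ Cl(𝔤)`. -/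
abbrev QuantumWeilAlgebra (B : LinearMap.BilinForm k g) : Type _ :=
  UniversalEnvelopingAlgebra k g ⊗[k] CliffordAlgebra B.toQuadraticMap

/-- The cubic Dirac operator of `P`, with an arbitrary coefficient `d` and an arbitrary bilinear
map `φ` in place of `π_𝔭 ∘ [·, ·]` in its cubic term. -/
def cubicDirac (B : LinearMap.BilinForm k g) (y y' : I → g) (φ : g →ₗ[k] g →ₗ[k] g) (d : k) :
    QuantumWeilAlgebra B :=
  ∑ i, UniversalEnvelopingAlgebra.ι k (y i) ⊗ₜ ι B.toQuadraticMap (y' i) +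
    1 ⊗ₜ (d • cubicElement B y y' φ)

/-- The diagonal action `θ(Z) = Z ⊗ 1 + 1 ⊗ ads_𝔭(Z)`. -/
def spinDiagonal [Invertible (4 : k)] (B : LinearMap.BilinForm k g) (y y' : I → g) (Z : g) :
    QuantumWeilAlgebra B :=
  UniversalEnvelopingAlgebra.ι k Z ⊗ₜ 1 + 1 ⊗ₜ spinLift B y y' (LieAlgebra.ad k g Z)

/-- The Dirac operator built from the families `z` and `z'`, twisted by the spin action of `P`, with
an arbitrary coefficient `c` of its cubic term. -/
def twistedDirac [Invertible (4 : k)] (B : LinearMap.BilinForm k g) (z z' : A → g) (y y' : I → g)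
    (c : k) : QuantumWeilAlgebra B :=
  ∑ a, UniversalEnvelopingAlgebra.ι k (z a) ⊗ₜ ι B.toQuadraticMap (z' a) +
    ∑ a, 1 ⊗ₜ (ι B.toQuadraticMap (z' a) * spinLift B y y' (LieAlgebra.ad k g (z a))) +
    1 ⊗ₜ (c • cubicElement B z z' (LieModule.toEnd k g g))

theorem twistedDirac_eq_sum_spinDiagonal [Invertible (4 : k)] (z z' : A → g) (c : k) :
    twistedDirac B z z' y y' c =
      ∑ a, 1 ⊗ₜ ι B.toQuadraticMap (z' a) * spinDiagonal B y y' (z a) +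
        c • 1 ⊗ₜ cubicElement B z z' (LieModule.toEnd k g g) := by
  simp [twistedDirac, spinDiagonal, mul_add, Finset.sum_add_distrib]

section SpinDiagonal

variable [Invertible (4 : k)]

theorem lie_spinDiagonal_one_tmul (Z : g) (x : CliffordAlgebra B.toQuadraticMap) :
    ⁅spinDiagonal B y y' Z, (1 ⊗ₜ x : QuantumWeilAlgebra B)⁆ =
      1 ⊗ₜ ⁅spinLift B y y' (LieAlgebra.ad k g Z), x⁆ := by
  simp only [spinDiagonal, Ring.lie_def, add_mul, mul_add, Algebra.TensorProduct.tmul_mul_tmul,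
    one_mul, mul_one, tmul_sub]
  abel

theorem lie_spinDiagonal_ι_tmul_one (Z X : g) :
    ⁅spinDiagonal B y y' Z, (UniversalEnvelopingAlgebra.ι k X ⊗ₜ 1 : QuantumWeilAlgebra B)⁆ =
      UniversalEnvelopingAlgebra.ι k ⁅Z, X⁆ ⊗ₜ 1 := by
  simp only [spinDiagonal, Ring.lie_def, LieHom.map_lie, add_mul, mul_add,
    Algebra.TensorProduct.tmul_mul_tmul, one_mul, mul_one, sub_tmul]
  abel

theorem IsDualFrame.commute_spinDiagonal_cubicDirac (h : IsDualFrame B P y y') (hB : B.IsSymm)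
    (hinv : B.lieInvariant g) {Z : g} (hZP : ∀ Y ∈ P, ⁅Z, Y⁆ ∈ P) (hφP : ∀ X Y, φ X Y ∈ P)
    (hφZ : ∀ X Y, ⁅Z, φ X Y⁆ = φ ⁅Z, X⁆ Y + φ X ⁅Z, Y⁆) (d : k) :
    Commute (spinDiagonal B y y' Z) (cubicDirac B y y' φ d) := by
  have spin_action : ∀ Y ∈ P, ⁅spinLift B y y' (LieAlgebra.ad k g Z), ι B.toQuadraticMap Y⁆ =
      ι B.toQuadraticMap ⁅Z, Y⁆ := fun Y hY => h.lie_spinLift_ι hB (hinv Z) hZP hY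
  let E : g →ₗ[k] QuantumWeilAlgebra B :=
    Algebra.TensorProduct.includeRight.toLinearMap ∘ₗ ι B.toQuadraticMap
  let K : g →ₗ[k] QuantumWeilAlgebra B :=
    Algebra.TensorProduct.includeLeft.toLinearMap ∘ₗ (UniversalEnvelopingAlgebra.ι k).toLinearMap
  have linear_part : ⁅spinDiagonal B y y' Z, ∑ i, E (y' i) * K (y i)⁆ = 0 :=
    h.lie_sum_mul_eq_zero (T := LieAlgebra.ad k g Z) hB (hinv Z) hZP E K
      (fun Y hY => (lie_spinDiagonal_one_tmul Z _).trans (congrArg _ (spin_action Y hY)))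
      (fun Y _ => lie_spinDiagonal_ι_tmul_one Z Y)
  have linear_eq : ∑ i, E (y' i) * K (y i) =
      ∑ i, UniversalEnvelopingAlgebra.ι k (y i) ⊗ₜ ι B.toQuadraticMap (y' i) := by
    simp [E, K]
  have cubic_part : Commute (spinLift B y y' (LieAlgebra.ad k g Z)) (cubicElement B y y' φ) :=
    commute_iff_lie_eq.mpr <|
      h.lie_cubicElement_eq_zero (T := LieAlgebra.ad k g Z) hB (hinv Z) hZP hφP hφZ spin_action
  rw [commute_iff_lie_eq, cubicDirac, lie_add, ← linear_eq, linear_part, zero_add,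
    lie_spinDiagonal_one_tmul, (cubic_part.smul_right d).lie_eq, tmul_zero]

end SpinDiagonal

theorem anticommute_one_tmul_ι_cubicDirac (hB : B.IsSymm) {W : g} (hy' : ∀ i, B W (y' i) = 0)
    (hφ : ∀ i j, B W (φ (y i) (y j)) = 0) (d : k) :
    Anticommute (1 ⊗ₜ ι B.toQuadraticMap W) (cubicDirac B y y' φ d) := by
  refine (Anticommute.add_left (Anticommute.sum_left fun i _ => ?_) ?_).symm
  · exact (anticommute_ι_of_isOrtho hB (hy' i)).symm.tmul (Commute.one_right _)
  · exact ((anticommute_ι_cubicElement hB hy' hφ).symm.smul_left d).tmul (Commute.one_right _)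

theorem anticommute_one_tmul_cubicElement {z z' : A → g} {ψ : g →ₗ[k] g →ₗ[k] g}
    {D : QuantumWeilAlgebra B} (hz' : ∀ a, Anticommute (1 ⊗ₜ ι B.toQuadraticMap (z' a)) D)
    (hψ : ∀ a c, Anticommute (1 ⊗ₜ ι B.toQuadraticMap (ψ (z a) (z c))) D) :
    Anticommute (1 ⊗ₜ cubicElement B z z' ψ) D := by
  rw [← Algebra.TensorProduct.includeRight_apply, cubicElement]
  simp only [map_sum, map_mul]
  exact Anticommute.sum_left fun a _ => Anticommute.sum_left fun c _ =>
    Anticommute.mul_mul_left (hz' a) (hz' c) (hψ a c)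

theorem lieInvariant_of_apply_lie_eq (hinv : ∀ X Y Z, B ⁅X, Y⁆ Z = B X ⁅Y, Z⁆) :
    B.lieInvariant g := fun X Y Z => by
  rw [← lie_skew, map_neg, LinearMap.neg_apply, hinv]

theorem lie_mem_orthogonal (hinv : B.lieInvariant g) {H : LieSubalgebra k g} {Z Y : g} (hZ : Z ∈ H)
    (hY : Y ∈ B.orthogonal H.toSubmodule) : ⁅Z, Y⁆ ∈ B.orthogonal H.toSubmodule := by
  intro W hW
  rw [← neg_eq_zero, ← hinv Z W Y]
  exact hY _ (H.lie_mem hZ hW)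

theorem dirac_decoupling_general [Invertible (4 : k)] (hB : B.IsSymm) (hinv : B.lieInvariant g)
    {H : LieSubalgebra k g} (hHP : P ≤ B.orthogonal H.toSubmodule)
    (hlie : ∀ Z ∈ H, ∀ Y ∈ P, ⁅Z, Y⁆ ∈ P) {z z' : A → g} (hz : ∀ a, z a ∈ H)
    (hz' : ∀ a, z' a ∈ H) (h : IsDualFrame B P y y') (hφP : ∀ X Y, φ X Y ∈ P)
    (hφH : ∀ Z ∈ H, ∀ X Y, ⁅Z, φ X Y⁆ = φ ⁅Z, X⁆ Y + φ X ⁅Z, Y⁆) (c d : k) :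
    Anticommute (twistedDirac B z z' y y' c) (cubicDirac B y y' φ d) := by
  have odd : ∀ W ∈ H, Anticommute (1 ⊗ₜ ι B.toQuadraticMap W) (cubicDirac B y y' φ d) :=
    fun W hW => anticommute_one_tmul_ι_cubicDirac hB (fun i => hHP (h.mem_dual i) W hW)
      (fun i j => hHP (hφP _ _) W hW) d
  rw [twistedDirac_eq_sum_spinDiagonal]
  refine Anticommute.add_left (Anticommute.sum_left fun a _ => ?_) ?_
  · exact (odd _ (hz' a)).mul_left
      (h.commute_spinDiagonal_cubicDirac hB hinv (hlie _ (hz a)) hφP (hφH _ (hz a)) d)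
  · exact (anticommute_one_tmul_cubicElement (fun a => odd _ (hz' a))
      fun a b => odd _ (H.lie_mem (hz a) (hz b))).smul_left c

end Dirac

end Commutator

/-- Decoupling of the two Dirac operators: the twisted Dirac operator `D'_𝔥` on `𝔥` and
Kostant's cubic Dirac operator `D_{𝔤/𝔥}` anticommute in `A = U(𝔤) ⊗ Cl(𝔤)`:
`D'_𝔥 · D_{𝔤/𝔥} + D_{𝔤/𝔥} · D'_𝔥 = 0`. -/
theorem dirac_decoupling
    {k : Type*} [Field k] [CharZero k]
    {g : Type*} [LieRing g] [LieAlgebra k g]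
    (B : LinearMap.BilinForm k g)
    (hsymm : ∀ X Y : g, B X Y = B Y X)
    (hnondeg : B.Nondegenerate)
    (hinv : ∀ X Y Z : g, B ⁅X, Y⁆ Z = B X ⁅Y, Z⁆)
    (H : LieSubalgebra k g) (P : Submodule k g)
    (hHnd : ∀ Z ∈ H, (∀ W ∈ H, B Z W = 0) → Z = 0)
    (hP : P = B.orthogonal H.toSubmodule)
    (hcompl : IsCompl H.toSubmodule P)
    (pp : g →ₗ[k] g)
    (hpp_mem : ∀ X : g, pp X ∈ P)
    (hpp_P : ∀ Y ∈ P, pp Y = Y)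
    (hpp_H : ∀ Z ∈ H, pp Z = 0)
    {A' : Type*} [Fintype A'] [DecidableEq A']
    (bh : A' → g) (hbh : ∀ a, bh a ∈ H)
    (bhd : A' → g) (hbhd : ∀ a, bhd a ∈ H)
    (hdualh : ∀ a c, B (bhd a) (bh c) = if a = c then 1 else 0)
    {I : Type*} [Fintype I] [DecidableEq I]
    (bp : I → g) (hbp : ∀ i, bp i ∈ P)
    (bpd : I → g) (hbpd : ∀ i, bpd i ∈ P)
    (hdualp : ∀ i j, B (bpd i) (bp j) = if i = j then 1 else 0)
    (hindep : LinearIndependent k (Sum.elim bh bp))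
    (hspan : Submodule.span k (Set.range (Sum.elim bh bp)) = ⊤)
    (Q : QuadraticForm k g) (hQ : ∀ X : g, Q X = B X X)
    (adsp : g → CliffordAlgebra Q)
    (hadsp : ∀ X : g, adsp X = (-(1/4 : k)) • ∑ i, ι Q (bpd i) * ι Q (pp ⁅X, bp i⁆))
    (γh γp : CliffordAlgebra Q)
    (hγh : γh = (-(1/24 : k)) • ∑ a, ∑ c,
        ι Q (bhd a) * ι Q (bhd c) * ι Q ⁅bh a, bh c⁆)
    (hγp : γp = (-(1/24 : k)) • ∑ i, ∑ j,
        ι Q (bpd i) * ι Q (bpd j) * ι Q (pp ⁅bp i, bp j⁆))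
    (Dh' Dgh : UniversalEnvelopingAlgebra k g ⊗[k] CliffordAlgebra Q)
    (hDh' : Dh' = (∑ a, UniversalEnvelopingAlgebra.ι k (bh a) ⊗ₜ[k] ι Q (bhd a))
              + (∑ a, (1 : UniversalEnvelopingAlgebra k g) ⊗ₜ[k] (ι Q (bhd a) * adsp (bh a)))
              + (1 : UniversalEnvelopingAlgebra k g) ⊗ₜ[k] ((2 : k) • γh))
    (hDgh : Dgh = (∑ i, UniversalEnvelopingAlgebra.ι k (bp i) ⊗ₜ[k] ι Q (bpd i))
              + (1 : UniversalEnvelopingAlgebra k g) ⊗ₜ[k] ((2 : k) • γp)) :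
    Dh' * Dgh + Dgh * Dh' = 0 := by
  let : Invertible (4 : k) := invertibleOfNonzero (OfNat.ofNat_ne_zero 4)
  obtain rfl : Q = B.toQuadraticMap := QuadraticMap.ext hQ
  subst hP
  have hB : B.IsSymm := ⟨hsymm⟩
  have hBinv : B.lieInvariant g := lieInvariant_of_apply_lie_eq hinv
  have hlie : ∀ Z ∈ H, ∀ Y ∈ B.orthogonal H.toSubmodule, ⁅Z, Y⁆ ∈ B.orthogonal H.toSubmodule :=
    fun Z hZ Y hY => lie_mem_orthogonal hBinv hZ hY
  have frame : IsDualFrame B (B.orthogonal H.toSubmodule) bp bpd := .of_projection hbp hbpd hdualp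
    (fun i a => (hsymm _ _).trans (hbpd i _ (hbh a))) hspan hpp_P fun a => hpp_H _ (hbh a)
  have pp_lie (Z : g) (hZ : Z ∈ H) : ∀ X, ⁅Z, pp X⁆ = pp ⁅Z, X⁆ :=
    apply_projection_comm (T := LieAlgebra.ad k g Z) hcompl.codisjoint hpp_H hpp_P
      (fun _ => H.lie_mem hZ) (hlie Z hZ)
  have ads_eq (a : A') : adsp (bh a) = spinLift B bp bpd (LieAlgebra.ad k g (bh a)) := by
    simp [hadsp, spinLift, hpp_P _ (hlie _ (hbh a) _ (hbp _))]
  have twisted_eq : Dh' = twistedDirac B bh bhd bp bpd (2 * -(1 / 24)) := by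
    simp only [hDh', hγh, ads_eq, smul_smul, twistedDirac, cubicElement]
    rfl
  have cubic_eq : Dgh = cubicDirac B bp bpd ((LieModule.toEnd k g g).compr₂ pp)
      (2 * -(1 / 24)) := by
    rw [hDgh, hγp, smul_smul]
    rfl
  rw [twisted_eq, cubic_eq]
  exact dirac_decoupling_general hB hBinv le_rfl hlie hbh hbhd frame
    (fun _ _ => hpp_mem _) (fun Z hZ X Y => (pp_lie Z hZ _).trans
      ((congrArg pp (leibniz_lie Z X Y)).trans (map_add _ _ _))) _ _
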